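/- Let F(y₁,y₂) = ∫_a^{y₁} ∫_a^{y₂} f(u,v) dv du be the joint CDF of the DPRH model and F_{Y₁}(y₁) = ∫_a^{y₁} ∫_a^b f(u,v) dv du, F_{Y₂}(y₂) = ∫_a^b ∫_a^{y₂} f(u,v) dv du its marginal CDFs. Then F(y₁,y₂) = F_{Y₁}(y₁)·F_{Y₂}(y₂) for all y₁, y₂ ∈ (a,b) if and only if θ₁′ = θ₁ and θ₂′ = θ₂. -/

import Mathlib

open MeasureTheory Set

noncomputable def dprh (a b : ℝ) (F₀ f₀ : ℝ → ℝ) (θ₁ θ₂ θ₁' θ₂' : ℝ) (y₁ y₂ : ℝ) : ℝ :=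
  if a < y₁ ∧ y₁ < y₂ ∧ y₂ < b then
    θ₁' * θ₂ * f₀ y₁ * f₀ y₂ * F₀ y₁ ^ (θ₁' - 1) * F₀ y₂ ^ (θ₁ + θ₂ - θ₁' - 1)
  else if a < y₂ ∧ y₂ < y₁ ∧ y₁ < b then
    θ₁ * θ₂' * f₀ y₁ * f₀ y₂ * F₀ y₁ ^ (θ₁ + θ₂ - θ₂' - 1) * F₀ y₂ ^ (θ₂' - 1)
  else 0

/-!
The probability integral transform `y ↦ F₀ y` reduces the claim to the uniform baseline on `(0, 1)`.
There, integrating each branch of the density first in the smaller coordinate gives, for `s ≤ t`,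

`F(s, t) = s ^ θ₁' * (s ^ (θ₁ + θ₂ - θ₁') + θ₂ * ∫ v in s..t, v ^ (θ₁ + θ₂ - θ₁' - 1))`,

and the case `t ≤ s` follows by exchanging the two coordinates. Independence makes the ratio
`F(s, t) / F(s, 1)` constant in `s ∈ (0, t)`, while the brackets for `t` and for `1` differ by a
nonzero constant. Hence the bracket itself is constant in `s`, and its derivative
`(θ₁ - θ₁') * s ^ (θ₁ + θ₂ - θ₁' - 1)` vanishes, so `θ₁' = θ₁`; by symmetry `θ₂' = θ₂`.
Conversely, for these parameters `F(s, t) = s ^ θ₁ * t ^ θ₂`.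
-/

open Filter
open scoped Topology

section ChangeOfVariables

theorem image_Ioo_eq_of_strictMonoOn_of_tendsto {α β : Type*}
    [ConditionallyCompleteLinearOrder α] [DenselyOrdered α] [TopologicalSpace α] [OrderTopology α]
    [LinearOrder β] [TopologicalSpace β] [OrderClosedTopology β]
    {a b : α} {A B : β} {F : α → β} (hab : a < b) (hcont : ContinuousOn F (Ioo a b))
    (hmono : StrictMonoOn F (Ioo a b)) (hA : Tendsto F (𝓝[>] a) (𝓝 A))
    (hB : Tendsto F (𝓝[<] b) (𝓝 B)) : F '' Ioo a b = Ioo A B := by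
  have : (𝓝[>] a).NeBot := nhdsGT_neBot_of_exists_gt ⟨b, hab⟩
  have : (𝓝[<] b).NeBot := nhdsLT_neBot_of_exists_lt ⟨a, hab⟩
  apply Subset.antisymm
  · rintro _ ⟨y, hy, rfl⟩
    obtain ⟨x, hax, hxy⟩ := exists_between hy.1
    obtain ⟨z, hyz, hzb⟩ := exists_between hy.2
    have hx : x ∈ Ioo a b := ⟨hax, hxy.trans hy.2⟩
    have hz : z ∈ Ioo a b := ⟨hy.1.trans hyz, hzb⟩
    have hAx : A ≤ F x := le_of_tendsto hA <| by
      filter_upwards [Ioo_mem_nhdsGT hax] with w hw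
      exact (hmono ⟨hw.1, hw.2.trans hx.2⟩ hx hw.2).le
    have hzB : F z ≤ B := ge_of_tendsto hB <| by
      filter_upwards [Ioo_mem_nhdsLT hzb] with w hw
      exact (hmono hz ⟨hz.1.trans hw.1, hw.2⟩ hw.1).le
    exact ⟨hAx.trans_lt (hmono hx hy hxy), (hmono hy hz hyz).trans_le hzB⟩
  · exact isPreconnected_Ioo.intermediate_value_Ioo (le_principal_iff.2 (Ioo_mem_nhdsGT hab))
      (le_principal_iff.2 (Ioo_mem_nhdsLT hab)) hcont hA hB

theorem setIntegral_Ioo_deriv_smul_comp {E : Type*} [NormedAddCommGroup E] [NormedSpace ℝ E]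
    {a b A B : ℝ} {F f : ℝ → ℝ} (hab : a < b) (hderiv : ∀ y ∈ Ioo a b, HasDerivAt F (f y) y)
    (hmono : StrictMonoOn F (Ioo a b)) (hA : Tendsto F (𝓝[>] a) (𝓝 A))
    (hB : Tendsto F (𝓝[<] b) (𝓝 B)) (φ : ℝ → E) :
    ∫ y in Ioo a b, f y • φ (F y) = ∫ s in Ioo A B, φ s := by
  rw [← image_Ioo_eq_of_strictMonoOn_of_tendsto hab (HasDerivAt.continuousOn hderiv) hmono hA hB]
  exact (integral_image_eq_integral_deriv_smul_of_monotoneOn measurableSet_Ioo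
    (fun y hy => (hderiv y hy).hasDerivWithinAt) hmono.monotoneOn φ).symm

end ChangeOfVariables

section TriangleRpow

/-- The product of powers `u ^ (p - 1) * v ^ (q - 1)` cut off to the triangle `u < v`. Up to a
constant, each branch of the DPRH density has this shape in the coordinates `F₀ y₁`, `F₀ y₂`. -/
noncomputable def triangleRpow (p q u v : ℝ) : ℝ :=
  if u < v then u ^ (p - 1) * v ^ (q - 1) else 0

variable {p q s t : ℝ}

theorem triangleRpow_nonneg {u v : ℝ} (hu : 0 ≤ u) (hv : 0 ≤ v) : 0 ≤ triangleRpow p q u v := by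
  unfold triangleRpow
  split_ifs <;> positivity

theorem measurable_uncurry_triangleRpow : Measurable (Function.uncurry (triangleRpow p q)) :=
  Measurable.ite (measurableSet_lt measurable_fst measurable_snd) (by fun_prop) measurable_const

theorem triangleRpow_eq_indicator (v : ℝ) :
    (fun u => triangleRpow p q u v) =
      (Iio v).indicator fun u => u ^ (p - 1) * v ^ (q - 1) := by
  ext u
  simp only [triangleRpow, indicator_apply, mem_Iio]

theorem integrableOn_Ioo_rpow_sub_one (hp : 0 < p) (hs : 0 < s) :
    IntegrableOn (fun u : ℝ => u ^ (p - 1)) (Ioo 0 s) :=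
  (intervalIntegral.integrableOn_Ioo_rpow_iff hs).2 (by linarith)

theorem setIntegral_Ioo_rpow_sub_one (hp : 0 < p) (hs : 0 ≤ s) :
    ∫ u in Ioo 0 s, u ^ (p - 1) = s ^ p / p := by
  rw [← integral_Ioc_eq_integral_Ioo, ← intervalIntegral.integral_of_le hs,
    integral_rpow (Or.inl (by linarith)), sub_add_cancel, Real.zero_rpow hp.ne', sub_zero]

theorem integrableOn_triangleRpow (hp : 0 < p) (hs : 0 < s) (v : ℝ) :
    IntegrableOn (fun u => triangleRpow p q u v) (Ioo 0 s) := by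
  rw [triangleRpow_eq_indicator]
  exact ((integrableOn_Ioo_rpow_sub_one hp hs).mul_const _).indicator measurableSet_Iio

theorem setIntegral_triangleRpow (hp : 0 < p) (hs : 0 ≤ s) {v : ℝ} (hv : 0 ≤ v) :
    ∫ u in Ioo 0 s, triangleRpow p q u v = min s v ^ p / p * v ^ (q - 1) := by
  rw [triangleRpow_eq_indicator, setIntegral_indicator measurableSet_Iio, Ioo_inter_Iio,
    integral_mul_const, setIntegral_Ioo_rpow_sub_one hp (le_min hs hv)]

theorem integrableOn_min_rpow_mul_rpow (hp : 0 < p) (hpq : 0 < p + q) (hs : 0 ≤ s) (ht : 0 < t) :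
    IntegrableOn (fun v => min s v ^ p / p * v ^ (q - 1)) (Ioo 0 t) := by
  refine Integrable.mono' ((integrableOn_Ioo_rpow_sub_one hpq ht).const_mul p⁻¹)
    (by fun_prop) ?_
  refine (ae_restrict_iff' measurableSet_Ioo).2 (.of_forall fun v hv => ?_)
  have hv0 : 0 < v := hv.1
  have : 0 ≤ min s v := le_min hs hv0.le
  rw [Real.norm_of_nonneg (by positivity)]
  calc min s v ^ p / p * v ^ (q - 1) ≤ v ^ p / p * v ^ (q - 1) := by
        gcongr; exact min_le_right s v
    _ = p⁻¹ * v ^ (p + q - 1) := by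
        rw [add_sub_assoc, Real.rpow_add hv0]; ring

theorem integrable_uncurry_triangleRpow (hp : 0 < p) (hpq : 0 < p + q) (hs : 0 < s)
    (ht : 0 < t) : Integrable (Function.uncurry (triangleRpow p q))
      ((volume.restrict (Ioo 0 s)).prod (volume.restrict (Ioo 0 t))) := by
  refine (integrable_prod_iff' measurable_uncurry_triangleRpow.aestronglyMeasurable).2
    ⟨.of_forall (integrableOn_triangleRpow hp hs), ?_⟩
  refine (integrableOn_min_rpow_mul_rpow hp hpq hs.le ht).congr_fun (fun v hv => ?_)
    measurableSet_Ioo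
  refine (setIntegral_triangleRpow hp hs.le hv.1.le).symm.trans ?_
  exact setIntegral_congr_fun measurableSet_Ioo fun u hu =>
    (Real.norm_of_nonneg (triangleRpow_nonneg hu.1.le hv.1.le)).symm

theorem setIntegral_min_rpow_mul_rpow_of_le (hpq : 0 < p + q) (ht : 0 ≤ t)
    (hts : t ≤ s) :
    ∫ v in Ioo 0 t, min s v ^ p / p * v ^ (q - 1) = t ^ (p + q) / (p * (p + q)) := by
  calc ∫ v in Ioo 0 t, min s v ^ p / p * v ^ (q - 1)
      = ∫ v in Ioo 0 t, p⁻¹ * v ^ (p + q - 1) :=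
        setIntegral_congr_fun measurableSet_Ioo fun v hv => by
          simp only [min_eq_right (hv.2.le.trans hts), add_sub_assoc, Real.rpow_add hv.1]
          ring
    _ = t ^ (p + q) / (p * (p + q)) := by
        rw [integral_const_mul, setIntegral_Ioo_rpow_sub_one hpq ht]
        field_simp

theorem setIntegral_min_rpow_mul_rpow_of_ge (hp : 0 < p) (hpq : 0 < p + q) (hs : 0 < s)
    (hst : s ≤ t) :
    ∫ v in Ioo 0 t, min s v ^ p / p * v ^ (q - 1) =
      s ^ (p + q) / (p * (p + q)) + s ^ p / p * ∫ v in s..t, v ^ (q - 1) := by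
  have hint := integrableOn_min_rpow_mul_rpow hp hpq hs.le (hs.trans_le hst)
  rw [← Ioo_union_Ico_eq_Ioo hs hst] at hint ⊢
  rw [setIntegral_union (Ico_disjoint_Ico_same.mono_left Ioo_subset_Ico_self) measurableSet_Ico
      hint.left_of_union hint.right_of_union,
    setIntegral_min_rpow_mul_rpow_of_le hpq hs.le le_rfl, integral_Ico_eq_integral_Ioo,
    intervalIntegral.integral_of_le hst, integral_Ioc_eq_integral_Ioo, ← integral_const_mul]
  congr 1
  exact setIntegral_congr_fun measurableSet_Ioo fun v hv => by simp only [min_eq_left hv.1.le]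

end TriangleRpow

section Profile

/-- The cofactor of `s ^ θ₁'` in the uniform-baseline DPRH distribution function for `s ≤ t`, where
`q = θ₁ + θ₂ - θ₁'` and `c = θ₂`. The integral is not evaluated, so that `q = 0` needs no
logarithmic case. -/
noncomputable def dprhProfile (q c s t : ℝ) : ℝ :=
  s ^ q + c * ∫ v in s..t, v ^ (q - 1)

variable {q c s t : ℝ}

theorem intervalIntegrable_rpow_of_pos (hs : 0 < s) (ht : 0 < t) :
    IntervalIntegrable (fun v : ℝ => v ^ q) volume s t :=
  intervalIntegral.intervalIntegrable_rpow (Or.inr (notMem_uIcc_of_lt hs ht))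

theorem hasDerivAt_dprhProfile (hs : 0 < s) (ht : 0 < t) :
    HasDerivAt (fun u => dprhProfile q c u t) ((q - c) * s ^ (q - 1)) s := by
  have hpow : ContinuousAt (fun v : ℝ => v ^ (q - 1)) s :=
    Real.continuousAt_rpow_const s (q - 1) (Or.inl hs.ne')
  have hint := intervalIntegral.integral_hasDerivAt_left
    (intervalIntegrable_rpow_of_pos (q := q - 1) hs ht)
    (Measurable.stronglyMeasurable (by fun_prop)).stronglyMeasurableAtFilter hpow
  exact ((Real.hasDerivAt_rpow_const (Or.inl hs.ne')).add (hint.const_mul c)).congr_deriv (by ring)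

theorem dprhProfile_eq_add_integral {r : ℝ} (hs : 0 < s) (ht : 0 < t) (hr : 0 < r) :
    dprhProfile q c s r = dprhProfile q c s t + c * ∫ v in t..r, v ^ (q - 1) := by
  rw [dprhProfile, dprhProfile, ← intervalIntegral.integral_add_adjacent_intervals
    (intervalIntegrable_rpow_of_pos hs ht) (intervalIntegrable_rpow_of_pos ht hr)]
  ring

theorem dprhProfile_self (hq : q ≠ 0) (hs : 0 < s) (ht : 0 < t) : dprhProfile q q s t = t ^ q := by
  have hq' : q - 1 ≠ -1 := fun h => hq (by linarith)
  rw [dprhProfile, integral_rpow (Or.inr ⟨hq', notMem_uIcc_of_lt hs ht⟩), sub_add_cancel]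
  field_simp
  ring

theorem eq_of_dprhProfile_eqOn_const {k : ℝ} (ht : 0 < t)
    (h : ∀ s ∈ Ioo 0 t, dprhProfile q c s t = k) : q = c := by
  obtain ⟨s, hs⟩ := exists_between ht
  have hconst : HasDerivAt (fun u => dprhProfile q c u t) 0 s :=
    (hasDerivAt_const s k).congr_of_eventuallyEq <|
      eventually_of_mem (Ioo_mem_nhds hs.1 hs.2) h
  have hzero := (hasDerivAt_dprhProfile hs.1 ht).unique hconst
  exact sub_eq_zero.1 ((mul_eq_zero.1 hzero).resolve_right (Real.rpow_pos_of_pos hs.1 _).ne')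

theorem eq_of_dprhProfile_eq_mul {r k : ℝ} (hc : c ≠ 0) (ht : 0 < t) (htr : t < r)
    (h : ∀ s ∈ Ioo 0 t, dprhProfile q c s t = dprhProfile q c s r * k) : q = c := by
  set I := ∫ v in t..r, v ^ (q - 1)
  have hIpos : 0 < I := intervalIntegral.intervalIntegral_pos_of_pos_on
    (intervalIntegrable_rpow_of_pos ht (ht.trans htr))
    (fun v hv => Real.rpow_pos_of_pos (ht.trans hv.1) _) htr
  have hlin : ∀ s ∈ Ioo 0 t, dprhProfile q c s t * (1 - k) = c * I * k := fun s hs => by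
    have := h s hs
    rw [dprhProfile_eq_add_integral hs.1 ht (ht.trans htr)] at this
    linear_combination this
  have hk : 1 - k ≠ 0 := fun hk => by
    obtain ⟨s, hs⟩ := exists_between ht
    have : c * I = 0 := by linear_combination -hlin s hs + (dprhProfile q c s t + c * I) * hk
    exact mul_ne_zero hc hIpos.ne' this
  exact eq_of_dprhProfile_eqOn_const ht fun s hs => eq_div_of_mul_eq hk (hlin s hs)

end Profile

section UniformBaseline

variable {θ₁ θ₂ θ₁' θ₂' s t : ℝ}

/-- The DPRH density for the uniform baseline `F₀ = id` on `(0, 1)`. The cutoff to the unit square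
is left out: the density is only integrated over rectangles inside that square. -/
noncomputable def uniformDPRH (θ₁ θ₂ θ₁' θ₂' s t : ℝ) : ℝ :=
  θ₁' * θ₂ * triangleRpow θ₁' (θ₁ + θ₂ - θ₁') s t +
    θ₁ * θ₂' * triangleRpow θ₂' (θ₁ + θ₂ - θ₂') t s

/-- The joint distribution function of the DPRH model with uniform baseline on `(0, 1)`; its
marginals are obtained by putting the other argument equal to `1`. -/
noncomputable def uniformCDF (θ₁ θ₂ θ₁' θ₂' s t : ℝ) : ℝ :=
  ∫ u in Ioo 0 s, ∫ v in Ioo 0 t, uniformDPRH θ₁ θ₂ θ₁' θ₂' u v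

theorem uniformCDF_eq_add (hθ₁ : 0 < θ₁) (hθ₂ : 0 < θ₂) (hθ₁' : 0 < θ₁') (hθ₂' : 0 < θ₂')
    (hs : 0 < s) (ht : 0 < t) :
    uniformCDF θ₁ θ₂ θ₁' θ₂' s t =
      θ₁' * θ₂ * (∫ v in Ioo 0 t, min s v ^ θ₁' / θ₁' * v ^ (θ₁ + θ₂ - θ₁' - 1)) +
        θ₁ * θ₂' * ∫ u in Ioo 0 s, min t u ^ θ₂' / θ₂' * u ^ (θ₁ + θ₂ - θ₂' - 1) := by
  have hupper := integrable_uncurry_triangleRpow (q := θ₁ + θ₂ - θ₁') hθ₁' (by linarith) hs ht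
  have hlower := integrable_uncurry_triangleRpow (q := θ₁ + θ₂ - θ₂') hθ₂' (by linarith) ht hs
  have hsum := integral_integral_add (hupper.const_mul (θ₁' * θ₂))
    (hlower.swap.const_mul (θ₁ * θ₂'))
  simp only [Function.uncurry_apply_pair, Function.comp_apply, Prod.swap_prod_mk,
    integral_const_mul] at hsum
  rw [integral_integral_swap hupper] at hsum
  refine hsum.trans ?_
  congr 2
  · exact setIntegral_congr_fun measurableSet_Ioo fun v hv =>
      setIntegral_triangleRpow hθ₁' hs.le hv.1.le
  · exact setIntegral_congr_fun measurableSet_Ioo fun u hu =>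
      setIntegral_triangleRpow hθ₂' ht.le hu.1.le

theorem uniformCDF_comm (hθ₁ : 0 < θ₁) (hθ₂ : 0 < θ₂) (hθ₁' : 0 < θ₁') (hθ₂' : 0 < θ₂')
    (hs : 0 < s) (ht : 0 < t) :
    uniformCDF θ₁ θ₂ θ₁' θ₂' s t = uniformCDF θ₂ θ₁ θ₂' θ₁' t s := by
  rw [uniformCDF_eq_add hθ₁ hθ₂ hθ₁' hθ₂' hs ht, uniformCDF_eq_add hθ₂ hθ₁ hθ₂' hθ₁' ht hs,
    add_comm θ₂ θ₁]
  ring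

theorem uniformCDF_of_le (hθ₁ : 0 < θ₁) (hθ₂ : 0 < θ₂) (hθ₁' : 0 < θ₁') (hθ₂' : 0 < θ₂')
    (hs : 0 < s) (hst : s ≤ t) :
    uniformCDF θ₁ θ₂ θ₁' θ₂' s t = s ^ θ₁' * dprhProfile (θ₁ + θ₂ - θ₁') θ₂ s t := by
  rw [uniformCDF_eq_add hθ₁ hθ₂ hθ₁' hθ₂' hs (hs.trans_le hst),
    setIntegral_min_rpow_mul_rpow_of_ge hθ₁' (by linarith) hs hst,
    setIntegral_min_rpow_mul_rpow_of_le (by linarith) hs.le hst, dprhProfile]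
  have hpow : s ^ θ₁' * s ^ (θ₁ + θ₂ - θ₁') = s ^ (θ₁ + θ₂) := by
    rw [← Real.rpow_add hs, add_sub_cancel]
  rw [mul_add (s ^ θ₁'), hpow, add_sub_cancel, add_sub_cancel]
  field_simp
  ring

theorem left_eq_of_uniformCDF_eq_mul {r k : ℝ} (hθ₁ : 0 < θ₁) (hθ₂ : 0 < θ₂) (hθ₁' : 0 < θ₁')
    (hθ₂' : 0 < θ₂') (ht : 0 < t) (htr : t < r)
    (h : ∀ s ∈ Ioo 0 t, uniformCDF θ₁ θ₂ θ₁' θ₂' s t = uniformCDF θ₁ θ₂ θ₁' θ₂' s r * k) :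
    θ₁' = θ₁ := by
  suffices θ₁ + θ₂ - θ₁' = θ₂ by linarith
  refine eq_of_dprhProfile_eq_mul (k := k) hθ₂.ne' ht htr fun s hs => ?_
  have hfac := h s hs
  rw [uniformCDF_of_le hθ₁ hθ₂ hθ₁' hθ₂' hs.1 hs.2.le,
    uniformCDF_of_le hθ₁ hθ₂ hθ₁' hθ₂' hs.1 (hs.2.trans htr).le, mul_assoc] at hfac
  exact mul_left_cancel₀ (Real.rpow_pos_of_pos hs.1 _).ne' hfac

theorem uniformCDF_self (hθ₁ : 0 < θ₁) (hθ₂ : 0 < θ₂) (hs : 0 < s) (ht : 0 < t) :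
    uniformCDF θ₁ θ₂ θ₁ θ₂ s t = s ^ θ₁ * t ^ θ₂ := by
  rcases le_total s t with hst | hts
  · rw [uniformCDF_of_le hθ₁ hθ₂ hθ₁ hθ₂ hs hst, add_sub_cancel_left,
      dprhProfile_self hθ₂.ne' hs ht]
  · rw [uniformCDF_comm hθ₁ hθ₂ hθ₁ hθ₂ hs ht, uniformCDF_of_le hθ₂ hθ₁ hθ₂ hθ₁ ht hts,
      add_sub_cancel_left, dprhProfile_self hθ₁.ne' ht hs, mul_comm]

theorem uniformCDF_eq_mul_iff (hθ₁ : 0 < θ₁) (hθ₂ : 0 < θ₂) (hθ₁' : 0 < θ₁') (hθ₂' : 0 < θ₂') :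
    (∀ s ∈ Ioo (0 : ℝ) 1, ∀ t ∈ Ioo (0 : ℝ) 1, uniformCDF θ₁ θ₂ θ₁' θ₂' s t =
      uniformCDF θ₁ θ₂ θ₁' θ₂' s 1 * uniformCDF θ₁ θ₂ θ₁' θ₂' 1 t) ↔ θ₁' = θ₁ ∧ θ₂' = θ₂ := by
  constructor
  · intro h
    obtain ⟨r, hr⟩ := exists_between (zero_lt_one' ℝ)
    constructor
    · exact left_eq_of_uniformCDF_eq_mul hθ₁ hθ₂ hθ₁' hθ₂' hr.1 hr.2 fun s hs =>
        h s ⟨hs.1, hs.2.trans hr.2⟩ r hr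
    · refine left_eq_of_uniformCDF_eq_mul (k := uniformCDF θ₁ θ₂ θ₁' θ₂' r 1)
        hθ₂ hθ₁ hθ₂' hθ₁' hr.1 hr.2 fun t ht => ?_
      rw [← uniformCDF_comm hθ₁ hθ₂ hθ₁' hθ₂' hr.1 ht.1,
        ← uniformCDF_comm hθ₁ hθ₂ hθ₁' hθ₂' one_pos ht.1,
        h r hr t ⟨ht.1, ht.2.trans hr.2⟩, mul_comm]
  · rintro ⟨rfl, rfl⟩ s hs t ht
    simp only [uniformCDF_self hθ₁ hθ₂ hs.1 ht.1, uniformCDF_self hθ₁ hθ₂ hs.1 one_pos,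
      uniformCDF_self hθ₁ hθ₂ one_pos ht.1, Real.one_rpow, mul_one, one_mul]

end UniformBaseline

section ProbabilityIntegralTransform

variable {a b : ℝ} {F f : ℝ → ℝ} {θ₁ θ₂ θ₁' θ₂' : ℝ}

theorem dprh_eq_mul_uniformDPRH (hmono : StrictMonoOn F (Ioo a b)) {u v : ℝ} (hu : u ∈ Ioo a b)
    (hv : v ∈ Ioo a b) :
    dprh a b F f θ₁ θ₂ θ₁' θ₂' u v = f u • f v • uniformDPRH θ₁ θ₂ θ₁' θ₂' (F u) (F v) := by
  simp only [smul_eq_mul, dprh, uniformDPRH, triangleRpow, hmono.lt_iff_lt hu hv,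
    hmono.lt_iff_lt hv hu, hu.1, hu.2, hv.1, hv.2, true_and, and_true]
  rcases lt_trichotomy u v with h | rfl | h
  · simp only [h, h.not_gt, if_true, if_false]
    ring
  · simp only [lt_irrefl, if_false, mul_zero, add_zero]
  · simp only [h, h.not_gt, if_true, if_false]
    ring

theorem integral_integral_dprh_eq_uniformCDF (hderiv : ∀ y ∈ Ioo a b, HasDerivAt F (f y) y)
    (hmono : StrictMonoOn F (Ioo a b)) (hFa : Tendsto F (𝓝[>] a) (𝓝 0))
    {y₁ y₂ s t : ℝ} (hy₁ : y₁ ∈ Ioc a b) (hy₂ : y₂ ∈ Ioc a b)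
    (hs : Tendsto F (𝓝[<] y₁) (𝓝 s)) (ht : Tendsto F (𝓝[<] y₂) (𝓝 t)) :
    ∫ u in a..y₁, ∫ v in a..y₂, dprh a b F f θ₁ θ₂ θ₁' θ₂' u v =
      uniformCDF θ₁ θ₂ θ₁' θ₂' s t := by
  have hsubst {y c : ℝ} (hy : y ∈ Ioc a b) (hc : Tendsto F (𝓝[<] y) (𝓝 c)) (φ : ℝ → ℝ) :
      ∫ v in Ioo a y, f v • φ (F v) = ∫ w in Ioo 0 c, φ w :=
    have hsub : Ioo a y ⊆ Ioo a b := Ioo_subset_Ioo_right hy.2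
    setIntegral_Ioo_deriv_smul_comp hy.1 (fun v hv => hderiv v (hsub hv)) (hmono.mono hsub) hFa hc φ
  simp only [intervalIntegral.integral_of_le hy₁.1.le, intervalIntegral.integral_of_le hy₂.1.le,
    integral_Ioc_eq_integral_Ioo]
  have hinner : EqOn (fun u => ∫ v in Ioo a y₂, dprh a b F f θ₁ θ₂ θ₁' θ₂' u v)
      (fun u => f u • ∫ v in Ioo 0 t, uniformDPRH θ₁ θ₂ θ₁' θ₂' (F u) v) (Ioo a y₁) := by
    intro u hu
    dsimp only
    rw [← hsubst hy₂ ht, ← integral_smul]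
    exact setIntegral_congr_fun measurableSet_Ioo fun v hv => dprh_eq_mul_uniformDPRH hmono
      (Ioo_subset_Ioo_right hy₁.2 hu) (Ioo_subset_Ioo_right hy₂.2 hv)
  rw [setIntegral_congr_fun measurableSet_Ioo hinner,
    hsubst hy₁ hs (fun u => ∫ v in Ioo 0 t, uniformDPRH θ₁ θ₂ θ₁' θ₂' u v), uniformCDF]

end ProbabilityIntegralTransform

theorem dprh_independent_iff_general {a b : ℝ} (hab : a < b) {F f : ℝ → ℝ}
    (hderiv : ∀ y ∈ Ioo a b, HasDerivAt F (f y) y) (hmono : StrictMonoOn F (Ioo a b))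
    (hFa : Tendsto F (𝓝[>] a) (𝓝 0)) (hFb : Tendsto F (𝓝[<] b) (𝓝 1))
    {θ₁ θ₂ θ₁' θ₂' : ℝ} (hθ₁ : 0 < θ₁) (hθ₂ : 0 < θ₂) (hθ₁' : 0 < θ₁') (hθ₂' : 0 < θ₂') :
    (∀ y₁ ∈ Ioo a b, ∀ y₂ ∈ Ioo a b,
        (∫ u in a..y₁, ∫ v in a..y₂, dprh a b F f θ₁ θ₂ θ₁' θ₂' u v) =
          (∫ u in a..y₁, ∫ v in a..b, dprh a b F f θ₁ θ₂ θ₁' θ₂' u v) *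
            (∫ u in a..b, ∫ v in a..y₂, dprh a b F f θ₁ θ₂ θ₁' θ₂' u v)) ↔
      (θ₁' = θ₁ ∧ θ₂' = θ₂) := by
  have hcont : ContinuousOn F (Ioo a b) := HasDerivAt.continuousOn hderiv
  have hlim : ∀ y ∈ Ioo a b, Tendsto F (𝓝[<] y) (𝓝 (F y)) := fun y hy =>
    (hderiv y hy).continuousAt.continuousWithinAt
  have hb : b ∈ Ioc a b := right_mem_Ioc.2 hab
  rw [← uniformCDF_eq_mul_iff hθ₁ hθ₂ hθ₁' hθ₂',
    ← image_Ioo_eq_of_strictMonoOn_of_tendsto hab hcont hmono hFa hFb]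
  simp only [forall_mem_image]
  refine forall₂_congr fun y₁ hy₁ => forall₂_congr fun y₂ hy₂ => ?_
  have hy₁' := Ioo_subset_Ioc_self hy₁
  have hy₂' := Ioo_subset_Ioc_self hy₂
  rw [integral_integral_dprh_eq_uniformCDF hderiv hmono hFa hy₁' hy₂' (hlim y₁ hy₁) (hlim y₂ hy₂),
    integral_integral_dprh_eq_uniformCDF hderiv hmono hFa hy₁' hb (hlim y₁ hy₁) hFb,
    integral_integral_dprh_eq_uniformCDF hderiv hmono hFa hb hy₂' hFb (hlim y₂ hy₂)]

theorem dprh_independent_iff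
    (a b : ℝ) (hab : a < b) (F₀ f₀ : ℝ → ℝ)
    (hderiv : ∀ y ∈ Ioo a b, HasDerivAt F₀ (f₀ y) y)
    (hf₀cont : ContinuousOn f₀ (Ioo a b))
    (hmono : StrictMonoOn F₀ (Ioo a b))
    (hf₀pos : ∀ y ∈ Ioo a b, 0 < f₀ y)
    (hF₀pos : ∀ y ∈ Ioo a b, 0 < F₀ y)
    (hF₀lt1 : ∀ y ∈ Ioo a b, F₀ y < 1)
    (hFa : Filter.Tendsto F₀ (nhdsWithin a (Ioi a)) (nhds 0))
    (hFb : Filter.Tendsto F₀ (nhdsWithin b (Iio b)) (nhds 1))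
    (θ₁ θ₂ θ₁' θ₂' : ℝ) (hθ₁ : 0 < θ₁) (hθ₂ : 0 < θ₂) (hθ₁' : 0 < θ₁') (hθ₂' : 0 < θ₂')
    :
    (∀ y₁ ∈ Ioo a b, ∀ y₂ ∈ Ioo a b,
        (∫ u in a..y₁, ∫ v in a..y₂, dprh a b F₀ f₀ θ₁ θ₂ θ₁' θ₂' u v) =
          (∫ u in a..y₁, ∫ v in a..b, dprh a b F₀ f₀ θ₁ θ₂ θ₁' θ₂' u v) *
            (∫ u in a..b, ∫ v in a..y₂, dprh a b F₀ f₀ θ₁ θ₂ θ₁' θ₂' u v)) ↔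
      (θ₁' = θ₁ ∧ θ₂' = θ₂) :=
  dprh_independent_iff_general hab hderiv hmono hFa hFb hθ₁ hθ₂ hθ₁' hθ₂'
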